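/- Let u : ℝⁿ → ℝ be continuous and define ũ : ℝ × ℝⁿ → ℝ by ũ(t,x) = u(x) for all (t,x). Then ũ is a viscosity solution of the parabolic PDE ∂u/∂t + 𝓛u(t,x) + g(u(t,x), u_x(t,x)σ(x)) = 0 on ℝ × ℝⁿ if and only if u is a viscosity solution of the elliptic PDE 𝓛u(x) + g(u(x), u_x(x)σ(x)) = 0 on ℝⁿ. -/

import Mathlib

open MeasureTheory Matrix Finset

attribute [local instance] Matrix.frobeniusNormedAddCommGroup

noncomputable section

/-- `ℝⁿ` as Euclidean space. -/
abbrev En (n : ℕ) := EuclideanSpace ℝ (Fin n)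

/-- the `i`-th standard basis vector of `ℝⁿ`. -/
def ee (n : ℕ) (i : Fin n) : En n := EuclideanSpace.single i 1

/-- The partial derivative `∂φ/∂xᵢ (x)`. -/
def pd {n : ℕ} (φ : En n → ℝ) (i : Fin n) (x : En n) : ℝ :=
  fderiv ℝ φ x (ee n i)

/-- The second partial derivative `∂²φ/∂xᵢ∂xⱼ (x)`. -/
def pd2 {n : ℕ} (φ : En n → ℝ) (i j : Fin n) (x : En n) : ℝ :=
  fderiv ℝ (fun y => pd φ j y) x (ee n i)

/-- The elliptic operator
`𝓛φ(x) = Σᵢ bᵢ(x) ∂φ/∂xᵢ(x) + (1/2) Σ_{i,j} (σ(x)σ(x)ᵀ)_{ij} ∂²φ/∂xᵢ∂xⱼ(x)`. -/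
def Lop {n : ℕ} (b : En n → En n) (σ : En n → Matrix (Fin n) (Fin n) ℝ)
    (φ : En n → ℝ) (x : En n) : ℝ :=
  ∑ i, b x i * pd φ i x
    + (1 / 2) * ∑ i, ∑ j, (σ x * (σ x)ᵀ) i j * pd2 φ i j x

/-- The spatial gradient of `φ` at `x`, viewed as a row vector, multiplied by the matrix
`σ(x)`; this is `φ_x(x) σ(x) ∈ ℝⁿ`. -/
def gradMul {n : ℕ} (σ : En n → Matrix (Fin n) (Fin n) ℝ) (φ : En n → ℝ) (x : En n) : En n :=
  (EuclideanSpace.equiv (Fin n) ℝ).symm (fun j => ∑ i, pd φ i x * σ x i j)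

/-- `φ : ℝ × ℝⁿ → ℝ` is of class `C^{1,2}`: it is continuous, the time derivative `∂φ/∂t`
exists everywhere and is continuous, and the first and second spatial derivatives exist
everywhere and are continuous. -/
def C12 {n : ℕ} (φ : ℝ × En n → ℝ) : Prop :=
  Continuous φ ∧
  (∀ p : ℝ × En n, DifferentiableAt ℝ (fun s => φ (s, p.2)) p.1) ∧
  Continuous (fun p : ℝ × En n => deriv (fun s => φ (s, p.2)) p.1) ∧
  (∀ p : ℝ × En n, DifferentiableAt ℝ (fun y => φ (p.1, y)) p.2) ∧
  Continuous (fun p : ℝ × En n => fderiv ℝ (fun y => φ (p.1, y)) p.2) ∧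
  (∀ p : ℝ × En n, DifferentiableAt ℝ (fun y => fderiv ℝ (fun z => φ (p.1, z)) y) p.2) ∧
  Continuous (fun p : ℝ × En n => fderiv ℝ (fun y => fderiv ℝ (fun z => φ (p.1, z)) y) p.2)

/-- `v : ℝ × ℝⁿ → ℝ` is a viscosity super-solution of the parabolic PDE
`∂u/∂t + 𝓛u + g(u, u_x σ) = 0` on `ℝ × ℝⁿ`. -/
def ParabolicSuperSol {n : ℕ} (g : ℝ × En n → ℝ) (b : En n → En n)
    (σ : En n → Matrix (Fin n) (Fin n) ℝ) (v : ℝ × En n → ℝ) : Prop :=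
  ∀ (t : ℝ) (x : En n) (φ : ℝ × En n → ℝ), C12 φ → φ (t, x) = v (t, x) →
    (∀ p : ℝ × En n, φ p ≤ v p) →
    deriv (fun s => φ (s, x)) t + Lop b σ (fun y => φ (t, y)) x
      + g (φ (t, x), gradMul σ (fun y => φ (t, y)) x) ≤ 0

/-- `v : ℝ × ℝⁿ → ℝ` is a viscosity sub-solution of the parabolic PDE
`∂u/∂t + 𝓛u + g(u, u_x σ) = 0` on `ℝ × ℝⁿ`. -/
def ParabolicSubSol {n : ℕ} (g : ℝ × En n → ℝ) (b : En n → En n)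
    (σ : En n → Matrix (Fin n) (Fin n) ℝ) (v : ℝ × En n → ℝ) : Prop :=
  ∀ (t : ℝ) (x : En n) (φ : ℝ × En n → ℝ), C12 φ → φ (t, x) = v (t, x) →
    (∀ p : ℝ × En n, v p ≤ φ p) →
    0 ≤ deriv (fun s => φ (s, x)) t + Lop b σ (fun y => φ (t, y)) x
      + g (φ (t, x), gradMul σ (fun y => φ (t, y)) x)

/-- `w : ℝⁿ → ℝ` is a viscosity super-solution of the elliptic PDE
`𝓛u + g(u, u_x σ) = 0` on `ℝⁿ`. -/
def EllipticSuperSol {n : ℕ} (g : ℝ × En n → ℝ) (b : En n → En n)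
    (σ : En n → Matrix (Fin n) (Fin n) ℝ) (w : En n → ℝ) : Prop :=
  ∀ (x : En n) (φ : En n → ℝ), ContDiff ℝ 2 φ → φ x = w x → (∀ y, φ y ≤ w y) →
    Lop b σ φ x + g (φ x, gradMul σ φ x) ≤ 0

/-- `w : ℝⁿ → ℝ` is a viscosity sub-solution of the elliptic PDE
`𝓛u + g(u, u_x σ) = 0` on `ℝⁿ`. -/
def EllipticSubSol {n : ℕ} (g : ℝ × En n → ℝ) (b : En n → En n)
    (σ : En n → Matrix (Fin n) (Fin n) ℝ) (w : En n → ℝ) : Prop :=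
  ∀ (x : En n) (φ : En n → ℝ), ContDiff ℝ 2 φ → φ x = w x → (∀ y, w y ≤ φ y) →
    0 ≤ Lop b σ φ x + g (φ x, gradMul σ φ x)

end

/-!
A test function `φ` touching `ũ` at `(t, x)` from one side satisfies `φ (s, x) ≤ u x = φ (t, x)` for
every `s` (or the reverse inequality), because `ũ` does not depend on time. Hence `s ↦ φ (s, x)` has
an extremum at `t`, the time derivative vanishes there, and the parabolic inequality for `φ` is the
elliptic one for the slice `φ (t, ·)`. Conversely, an elliptic test function is a parabolic test
function that is constant in time.
-/

section TestFunctions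

theorem contDiff_two_iff_fderiv {𝕜 E F : Type*} [NontriviallyNormedField 𝕜]
    [NormedAddCommGroup E] [NormedSpace 𝕜 E] [NormedAddCommGroup F] [NormedSpace 𝕜 F]
    {f : E → F} :
    ContDiff 𝕜 2 f ↔
      Differentiable 𝕜 f ∧ Differentiable 𝕜 (fderiv 𝕜 f) ∧
        Continuous (fderiv 𝕜 (fderiv 𝕜 f)) := by
  rw [← one_add_one_eq_two, contDiff_succ_iff_fderiv, contDiff_one_iff_fderiv]
  simp only [WithTop.one_ne_top, false_implies, true_and]

variable {n : ℕ}

theorem C12.contDiff_slice {φ : ℝ × En n → ℝ} (hφ : C12 φ) (t : ℝ) :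
    ContDiff ℝ 2 (fun y => φ (t, y)) := by
  obtain ⟨-, -, -, hdiff, -, hdiff₂, hcont₂⟩ := hφ
  exact contDiff_two_iff_fderiv.2
    ⟨fun y => hdiff (t, y), fun y => hdiff₂ (t, y), hcont₂.comp (Continuous.prodMk_right t)⟩

theorem C12.comp_snd_of_contDiff {φ : En n → ℝ} (hφ : ContDiff ℝ 2 φ) :
    C12 (fun p : ℝ × En n => φ p.2) := by
  obtain ⟨hdiff, hdiff₂, hcont₂⟩ := contDiff_two_iff_fderiv.1 hφ
  have htime : Continuous fun p : ℝ × En n => deriv (fun _ : ℝ => φ p.2) p.1 := by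
    simpa only [deriv_const] using continuous_const
  exact ⟨hdiff.continuous.comp continuous_snd,
    fun p => differentiableAt_const (φ p.2), htime,
    fun p => hdiff p.2, hdiff₂.continuous.comp continuous_snd,
    fun p => hdiff₂ p.2, hcont₂.comp continuous_snd⟩

end TestFunctions

section Touching

variable {X : Type*} {φ : ℝ × X → ℝ} {u : X → ℝ} {t : ℝ} {x : X}

theorem deriv_time_eq_zero_of_touches_below (heq : φ (t, x) = u x) (hle : ∀ p, φ p ≤ u p.2) :
    deriv (fun s => φ (s, x)) t = 0 :=
  IsLocalMax.deriv_eq_zero <| .of_forall fun s => (hle (s, x)).trans heq.ge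

theorem deriv_time_eq_zero_of_touches_above (heq : φ (t, x) = u x) (hge : ∀ p, u p.2 ≤ φ p) :
    deriv (fun s => φ (s, x)) t = 0 :=
  IsLocalMin.deriv_eq_zero <| .of_forall fun s => heq.le.trans (hge (s, x))

end Touching

section Viscosity

variable {n : ℕ} (b : En n → En n) (σ : En n → Matrix (Fin n) (Fin n) ℝ)
  (g : ℝ × En n → ℝ) (u : En n → ℝ)

theorem parabolicSuperSol_comp_snd_iff :
    ParabolicSuperSol g b σ (fun p => u p.2) ↔ EllipticSuperSol g b σ u := by
  constructor
  · intro hpar x φ hφ heq hle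
    simpa only [deriv_const, zero_add] using
      hpar 0 x (fun p => φ p.2) (C12.comp_snd_of_contDiff hφ) heq (fun p => hle p.2)
  · intro hell t x φ hφ heq hle
    rw [deriv_time_eq_zero_of_touches_below heq hle, zero_add]
    exact hell x (fun y => φ (t, y)) (hφ.contDiff_slice t) heq (fun y => hle (t, y))

theorem parabolicSubSol_comp_snd_iff :
    ParabolicSubSol g b σ (fun p => u p.2) ↔ EllipticSubSol g b σ u := by
  constructor
  · intro hpar x φ hφ heq hge
    simpa only [deriv_const, zero_add] using
      hpar 0 x (fun p => φ p.2) (C12.comp_snd_of_contDiff hφ) heq (fun p => hge p.2)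
  · intro hell t x φ hφ heq hge
    rw [deriv_time_eq_zero_of_touches_above heq hge, zero_add]
    exact hell x (fun y => φ (t, y)) (hφ.contDiff_slice t) heq (fun y => hge (t, y))

theorem parabolic_sol_iff_elliptic_sol_general :
    (ParabolicSuperSol g b σ (fun p => u p.2) ∧ ParabolicSubSol g b σ (fun p => u p.2)) ↔
      (EllipticSuperSol g b σ u ∧ EllipticSubSol g b σ u) :=
  and_congr (parabolicSuperSol_comp_snd_iff b σ g u) (parabolicSubSol_comp_snd_iff b σ g u)

end Viscosity

/-- **Lemma 2, full statement.** `ũ(t,x) := u(x)` is a viscosity solution of the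
parabolic PDE `∂u/∂t + 𝓛u + g(u, u_x σ) = 0` if and only if `u` is a viscosity
solution of the elliptic PDE `𝓛u + g(u, u_x σ) = 0`. -/
theorem parabolic_sol_iff_elliptic_sol {n : ℕ}
    (b : En n → En n) (σ : En n → Matrix (Fin n) (Fin n) ℝ)
    (hbσ : ∃ C > 0, ∀ x₁ x₂ : En n, ‖b x₁ - b x₂‖ + ‖σ x₁ - σ x₂‖ ≤ C * ‖x₁ - x₂‖)
    (g : ℝ × En n → ℝ) (hg0 : ∀ y : ℝ, g (y, 0) = 0)
    (hgLip : ∃ C > 0, ∀ (y₁ y₂ : ℝ) (z₁ z₂ : En n),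
      |g (y₁, z₁) - g (y₂, z₂)| ≤ C * (|y₁ - y₂| + ‖z₁ - z₂‖))
    (u : En n → ℝ) (hu : Continuous u) :
    (ParabolicSuperSol g b σ (fun p => u p.2) ∧ ParabolicSubSol g b σ (fun p => u p.2)) ↔
      (EllipticSuperSol g b σ u ∧ EllipticSubSol g b σ u) :=
  parabolic_sol_iff_elliptic_sol_general b σ g u
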